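/- arXiv:math/0605049 — 2 statements merged into one kernel-verified Lean document; each statement's English description precedes it below -/
import Mathlib

section
/- A map u : L^∞(Ω,ℱ,P) → ℝ satisfies (a) superadditivity u(X+Y) ≥ u(X)+u(Y), (b) monotonicity (X ≤ Y implies u(X) ≤ u(Y)), (c) positive homogeneity (u(λX) = λu(X) for all λ ≥ 0), (d) translation invariance (u(X+m) = u(X)+m for all m ∈ ℝ), and (e) the Fatou property (if |X_n| ≤ 1 and X_n → X in probability, then u(X) ≥ limsup_n u(X_n)) if and only if there exists a nonempty set D ⊆ 𝒫 such that u(X) = inf_{Q∈D} E_Q[X] for all X ∈ L^∞. -/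
open MeasureTheory Filter Set
open scoped ENNReal

variable {Ω : Type*} [MeasurableSpace Ω]

/-- Densities of probability measures absolutely continuous w.r.t. `P`. -/
def Dens (P : Measure Ω) : Set (Ω → ℝ) :=
  {Z | Measurable Z ∧ (∀ ω, 0 ≤ Z ω) ∧ ∫⁻ ω, ENNReal.ofReal (Z ω) ∂P = 1}

/-- `E_Q[X] = E_Q[X⁺] − E_Q[X⁻]` with the convention `∞ − ∞ = −∞`, where `dQ/dP = Z`. -/
noncomputable def eexp (P : Measure Ω) (Z X : Ω → ℝ) : EReal :=
  if (∫⁻ ω, ENNReal.ofReal (-(Z ω * X ω)) ∂P) = ⊤ then ⊥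
  else ((∫⁻ ω, ENNReal.ofReal (Z ω * X ω) ∂P : ℝ≥0∞) : EReal)
    - ((∫⁻ ω, ENNReal.ofReal (-(Z ω * X ω)) ∂P : ℝ≥0∞) : EReal)

/-- Coherent utility function determined by a set of densities `D`. -/
noncomputable def cohU (P : Measure Ω) (D : Set (Ω → ℝ)) (X : Ω → ℝ) : EReal :=
  ⨅ Z ∈ D, eexp P Z X

/-- The weak `L¹`-space associated with `D`. -/
def Lw (P : Measure Ω) (D : Set (Ω → ℝ)) : Set (Ω → ℝ) :=
  {X | Measurable X ∧ ⊥ < cohU P D X ∧ ⊥ < cohU P D (fun ω => -X ω)}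

noncomputable def tailSup (P : Measure Ω) (D : Set (Ω → ℝ)) (X : Ω → ℝ) (n : ℕ) : ℝ≥0∞ :=
  ⨆ Z ∈ D, ∫⁻ ω in {ω | (n : ℝ) < |X ω|}, ENNReal.ofReal (Z ω * |X ω|) ∂P

/-- The strong `L¹`-space associated with `D`. -/
def Ls (P : Measure Ω) (D : Set (Ω → ℝ)) : Set (Ω → ℝ) :=
  {X | Measurable X ∧ Tendsto (tailSup P D X) atTop (nhds 0)}

/-- Risk-neutral densities for the set `A` of attainable P&Ls. -/
def RiskNeutral (P : Measure Ω) (A : Set (Ω → ℝ)) : Set (Ω → ℝ) :=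
  {Z | Z ∈ Dens P ∧ ∀ X ∈ A, eexp P Z X ≤ 0}

/-- `A` is `D`-consistent. -/
def DConsistent (P : Measure Ω) (D A : Set (Ω → ℝ)) : Prop :=
  ∃ A' ⊆ A ∩ Ls P D, D ∩ RiskNeutral P A = D ∩ RiskNeutral P A'

/-- Sequential compactness of `D` in the weak topology `σ(L¹, L^∞)`. -/
def WSeqCompact (P : Measure Ω) (D : Set (Ω → ℝ)) : Prop :=
  ∀ Z : ℕ → Ω → ℝ, (∀ n, Z n ∈ D) → ∃ W ∈ D, ∃ φ : ℕ → ℕ, StrictMono φ ∧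
    ∀ g : Ω → ℝ, Measurable g → (∃ C : ℝ, ∀ ω, |g ω| ≤ C) →
      Tendsto (fun k => ∫ ω, Z (φ k) ω * g ω ∂P) atTop (nhds (∫ ω, W ω * g ω ∂P))

/-- `D` is closed under `L¹`-convergence (within densities). -/
def L1Closed (P : Measure Ω) (D : Set (Ω → ℝ)) : Prop :=
  ∀ Z : ℕ → Ω → ℝ, (∀ n, Z n ∈ D) → ∀ W ∈ Dens P,
    Tendsto (fun n => ∫ ω, |Z n ω - W ω| ∂P) atTop (nhds 0) → W ∈ D


section HilbertSeparation

variable {H : Type*} [NormedAddCommGroup H] [InnerProductSpace ℝ H] [CompleteSpace H]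

/-- A decreasing sequence of nonempty closed bounded convex subsets of a Hilbert space has a
common point. -/
theorem nonempty_iInter_of_antitone_convex {K : ℕ → Set H} (hanti : Antitone K)
    (hne : ∀ n, (K n).Nonempty) (hclosed : ∀ n, IsClosed (K n)) (hconv : ∀ n, Convex ℝ (K n))
    (hbdd : Bornology.IsBounded (K 0)) : (⋂ n, K n).Nonempty := by
  have hmin : ∀ n, ∃ p ∈ K n, ∀ w ∈ K n, ‖p‖ ≤ ‖w‖ := by
    intro n
    obtain ⟨p, hp, hpmin⟩ :=
      exists_norm_eq_iInf_of_complete_convex (hne n) (hclosed n).isComplete (hconv n) 0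
    refine ⟨p, hp, fun w hw => ?_⟩
    have h : (⨅ w : K n, ‖(0 : H) - w‖) ≤ ‖(0 : H) - (⟨w, hw⟩ : K n)‖ :=
      ciInf_le ⟨0, forall_mem_range.2 fun _ => norm_nonneg _⟩ _
    rw [← hpmin] at h
    simpa using h
  choose p hpK hpmin using hmin
  have hmono : Monotone fun n => ‖p n‖ ^ 2 := fun n m hnm =>
    pow_le_pow_left₀ (norm_nonneg _) (hpmin n _ (hanti hnm (hpK m))) 2
  obtain ⟨R, hR⟩ := hbdd.exists_norm_le
  have hba : BddAbove (range fun n => ‖p n‖ ^ 2) :=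
    ⟨R ^ 2, forall_mem_range.2 fun n =>
      pow_le_pow_left₀ (norm_nonneg _) (hR _ (hanti (Nat.zero_le n) (hpK n))) 2⟩
  have hcauchy := (tendsto_atTop_ciSup hmono hba).cauchySeq
  have hdist : ∀ n m, n ≤ m → ‖p m - p n‖ ^ 2 ≤ 2 * (‖p m‖ ^ 2 - ‖p n‖ ^ 2) := by
    intro n m hnm
    have hmid : (1 / 2 : ℝ) • p m + (1 / 2 : ℝ) • p n ∈ K n :=
      hconv n (hanti hnm (hpK m)) (hpK n) (by norm_num) (by norm_num) (by norm_num)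
    have h1 := hpmin n _ hmid
    rw [← smul_add, norm_smul] at h1
    have h2 := parallelogram_law_with_norm ℝ (p m) (p n)
    norm_num at h1
    nlinarith [norm_nonneg (p n), norm_nonneg (p m + p n)]
  have hp : CauchySeq p := by
    rw [Metric.cauchySeq_iff'] at hcauchy ⊢
    intro ε hε
    obtain ⟨N, hN⟩ := hcauchy (ε ^ 2 / 2) (by positivity)
    refine ⟨N, fun n hn => ?_⟩
    have h1 := hN n hn
    have h2 := hdist N n hn
    rw [Real.dist_eq] at h1
    rw [dist_eq_norm]
    have h3 := lt_of_abs_lt h1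
    exact lt_of_pow_lt_pow_left₀ 2 hε.le (by linarith)
  obtain ⟨x, hx⟩ := cauchySeq_tendsto_of_complete hp
  refine ⟨x, mem_iInter.2 fun n => ?_⟩
  exact (hclosed n).mem_of_tendsto hx
    (eventually_atTop.2 ⟨n, fun m hm => hanti hm (hpK m)⟩)

/-- Disjoint closed convex sets, one of them bounded, are a positive distance apart. -/
theorem exists_disjoint_thickening_of_convex {K L : Set H} (hK : Convex ℝ K) (hKc : IsClosed K)
    (hKb : Bornology.IsBounded K) (hL : Convex ℝ L) (hLc : IsClosed L) (hdisj : Disjoint K L) :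
    ∃ δ > 0, Disjoint (Metric.thickening δ L) K := by
  by_contra! hcon
  have hLne : L.Nonempty := by
    by_contra h
    rw [not_nonempty_iff_eq_empty] at h
    exact hcon 1 one_pos (by simp [h])
  obtain ⟨x, hx⟩ := nonempty_iInter_of_antitone_convex
    (K := fun n : ℕ => K ∩ Metric.cthickening (1 / ((n : ℝ) + 1)) L)
    (fun n m hnm => inter_subset_inter_right _
      (Metric.cthickening_mono (one_div_le_one_div_of_le (by positivity)
        (by simpa using hnm)) _))
    (fun n => by
      obtain ⟨y, hyL, hyK⟩ := not_disjoint_iff.1 (hcon (1 / ((n : ℝ) + 1)) (by positivity))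
      exact ⟨y, hyK, Metric.thickening_subset_cthickening _ _ hyL⟩)
    (fun n => hKc.inter Metric.isClosed_cthickening)
    (fun n => hK.inter (hL.cthickening _))
    (hKb.subset inter_subset_left)
  rw [mem_iInter] at hx
  refine disjoint_left.1 hdisj (hx 0).1 ?_
  rw [← hLc.closure_eq, Metric.mem_closure_iff_infDist_zero hLne]
  refine le_antisymm (ge_of_tendsto' tendsto_one_div_add_atTop_nhds_zero_nat fun n => ?_)
    Metric.infDist_nonneg
  have := (hx n).2
  rw [Metric.mem_cthickening_iff] at this
  exact ENNReal.toReal_le_of_le_ofReal (by positivity) this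

/-- Normalized separation of a closed convex set containing the origin from a
disjoint closed bounded convex set. -/
theorem exists_inner_le_two_and_one_lt_of_disjoint {K L : Set H} (hK : Convex ℝ K) (hKc : IsClosed K)
    (hKb : Bornology.IsBounded K) (hL : Convex ℝ L) (hLc : IsClosed L) (h0 : (0 : H) ∈ L)
    (hdisj : Disjoint K L) :
    ∃ f : H, (∀ b ∈ L, inner ℝ f b ≤ 2) ∧ ∀ x ∈ K, 1 < inner ℝ f x := by
  obtain ⟨δ, hδ, hdis⟩ := exists_disjoint_thickening_of_convex hK hKc hKb hL hLc hdisj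
  obtain ⟨g, s, hg1, hg2⟩ := geometric_hahn_banach_open (hL.thickening δ)
    Metric.isOpen_thickening hK hdis
  have hsub := Metric.self_subset_thickening hδ L
  have hs : 0 < s := by simpa using hg1 0 (hsub h0)
  refine ⟨(InnerProductSpace.toDual ℝ H).symm ((s⁻¹ * 2) • g), fun b hb => ?_, fun x hx => ?_⟩
  · rw [InnerProductSpace.toDual_symm_apply]
    have := hg1 b (hsub hb)
    simp only [smul_apply, smul_eq_mul]
    rw [mul_assoc, inv_mul_le_iff₀ hs]
    linarith
  · rw [InnerProductSpace.toDual_symm_apply]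
    have := hg2 x hx
    simp only [smul_apply, smul_eq_mul]
    rw [mul_assoc, lt_inv_mul_iff₀ hs]
    linarith

/-- If the bounded pieces `C ∩ B n` of a convex set `C` missing the origin are closed, there are
vectors `f n`, uniformly bounded above on `B n`, whose half-spaces `1 < ⟪f n, ·⟫` cover `C`. -/
theorem exists_seq_inner_le_two_and_one_lt {B : ℕ → Set H} {C : Set H}
    (hBconv : ∀ n, Convex ℝ (B n)) (hBclosed : ∀ n, IsClosed (B n))
    (hBbdd : ∀ n, Bornology.IsBounded (B n)) (hB0 : ∀ n, (0 : H) ∈ B n) (hBzero : B 0 ⊆ {0})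
    (hC : Convex ℝ C) (hCclosed : ∀ n, IsClosed (C ∩ B n)) (h0 : (0 : H) ∉ C) :
    ∃ f : ℕ → H, (∀ n, ∀ b ∈ B n, inner ℝ (f n) b ≤ 2) ∧
      ∀ n, ∀ x ∈ C ∩ B n, ∃ k, 1 < inner ℝ (f k) x := by
  have hstep : ∀ (n : ℕ) (S : Set H), ∃ f : H, Convex ℝ S → IsClosed S →
      Disjoint (C ∩ S) (B n) →
      (∀ b ∈ B n, inner ℝ f b ≤ 2) ∧ ∀ x ∈ C ∩ B (n + 1) ∩ S, 1 < inner ℝ f x := by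
    intro n S
    by_cases h : Convex ℝ S ∧ IsClosed S ∧ Disjoint (C ∩ S) (B n)
    · obtain ⟨hS, hSc, hd⟩ := h
      obtain ⟨f, hf⟩ := exists_inner_le_two_and_one_lt_of_disjoint
        ((hC.inter (hBconv (n + 1))).inter hS) ((hCclosed (n + 1)).inter hSc)
        ((hBbdd (n + 1)).subset (inter_subset_left.trans inter_subset_right))
        (hBconv n) (hBclosed n) (hB0 n)
        (hd.mono_left (inter_subset_inter_left S inter_subset_left))
      exact ⟨f, fun _ _ _ => hf⟩
    · exact ⟨0, fun h1 h2 h3 => (h ⟨h1, h2, h3⟩).elim⟩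
  choose F hF using hstep
  let S : ℕ → Set H := fun n =>
    Nat.rec univ (fun n S => S ∩ {x | inner ℝ (F n S) x ≤ 1}) n
  have hS : ∀ n, S (n + 1) = S n ∩ {x | inner ℝ (F n (S n)) x ≤ 1} := fun n => rfl
  have hinv : ∀ n, Convex ℝ (S n) ∧ IsClosed (S n) ∧ Disjoint (C ∩ S n) (B n) := by
    intro n
    induction n with
    | zero =>
      refine ⟨convex_univ, isClosed_univ, disjoint_left.2 fun x hx hxB => h0 ?_⟩
      rw [← mem_singleton_iff.1 (hBzero hxB)]
      exact hx.1
    | succ n ih =>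
      obtain ⟨h1, h2, h3⟩ := ih
      rw [hS]
      refine ⟨h1.inter ?_, h2.inter ?_, disjoint_left.2 fun x hx hxB => ?_⟩
      · exact convex_halfSpace_le (innerₗ H (F n (S n))).isLinear 1
      · exact isClosed_le (by fun_prop) continuous_const
      · exact absurd hx.2.2 (not_le.2 ((hF n (S n) h1 h2 h3).2 x ⟨⟨hx.1, hxB⟩, hx.2.1⟩))
  have hmem : ∀ n x, (∀ k, inner ℝ (F k (S k)) x ≤ 1) → x ∈ S n := by
    intro n x hx
    induction n with
    | zero => exact mem_univ x
    | succ n ih => exact ⟨ih, hx n⟩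
  refine ⟨fun n => F n (S n), fun n => (hF n _ (hinv n).1 (hinv n).2.1 (hinv n).2.2).1,
    fun n x hx => ?_⟩
  by_contra! hcon
  exact disjoint_left.1 (hinv n).2.2 ⟨hx.1, hmem n x hcon⟩ hx.2

end HilbertSeparation

section NullSequences

open scoped ZeroAtInfty

/-- The `k`-th unit vector of `c₀`. -/
noncomputable def zeroAtInftySingle (k : ℕ) : C₀(ℕ, ℝ) where
  toFun := Pi.single k 1
  continuous_toFun := continuous_of_discreteTopology
  zero_at_infty' := by
    rw [cocompact_eq_cofinite, Nat.cofinite_eq_atTop]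
    refine tendsto_const_nhds.congr' (eventually_atTop.2 ⟨k + 1, fun n hn => ?_⟩)
    rw [Pi.single_eq_of_ne (by omega)]

theorem sum_smul_zeroAtInftySingle_apply (a : ℕ → ℝ) (N j : ℕ) :
    (∑ k ∈ Finset.range N, a k • zeroAtInftySingle k) j = if j < N then a j else 0 := by
  have h : ∀ M : ℕ, (∑ k ∈ Finset.range M, a k • zeroAtInftySingle k) j =
      ∑ k ∈ Finset.range M, a k * (Pi.single k 1 : ℕ → ℝ) j := by
    intro M
    induction M with
    | zero => simp
    | succ M ih => rw [Finset.sum_range_succ, Finset.sum_range_succ, ← ih]; rfl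
  rw [h]
  simp [Pi.single_apply]

theorem ZeroAtInftyContinuousMap.norm_le_of_forall_abs_le (y : C₀(ℕ, ℝ)) {r : ℝ} (hr : 0 ≤ r)
    (h : ∀ j, |y j| ≤ r) : ‖y‖ ≤ r := by
  rw [← ZeroAtInftyContinuousMap.norm_toBCF_eq_norm]
  exact (BoundedContinuousFunction.norm_le hr).2 h

theorem ZeroAtInftyContinuousMap.abs_apply_le_norm (y : C₀(ℕ, ℝ)) (j : ℕ) : |y j| ≤ ‖y‖ := by
  rw [← ZeroAtInftyContinuousMap.norm_toBCF_eq_norm]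
  exact y.toBCF.norm_coe_le_norm j

theorem ZeroAtInftyContinuousMap.tendsto_sum_single (y : C₀(ℕ, ℝ)) :
    Tendsto (fun N => ∑ k ∈ Finset.range N, y k • zeroAtInftySingle k) atTop (nhds y) := by
  have hy : Tendsto y atTop (nhds 0) := by
    have := y.zero_at_infty'
    rwa [cocompact_eq_cofinite, Nat.cofinite_eq_atTop] at this
  rw [Metric.tendsto_atTop] at hy ⊢
  intro ε hε
  obtain ⟨N, hN⟩ := hy (ε / 2) (by positivity)
  refine ⟨N, fun n hn => ?_⟩
  rw [dist_eq_norm]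
  refine (norm_le_of_forall_abs_le _ (by positivity) fun j => ?_).trans_lt (half_lt_self hε)
  rw [ZeroAtInftyContinuousMap.sub_apply, sum_smul_zeroAtInftySingle_apply]
  split_ifs with h
  · simpa using (half_pos hε).le
  · simpa using (hN j (by omega)).le

/-- Continuous linear functionals on `c₀` are given by absolutely summable sequences. -/
theorem exists_summable_hasSum_of_dual_zeroAtInfty (ψ : StrongDual ℝ C₀(ℕ, ℝ)) :
    ∃ a : ℕ → ℝ, (Summable fun k => |a k|) ∧ ∀ y : C₀(ℕ, ℝ), HasSum (fun k => a k * y k) (ψ y) := by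
  have hsummable : Summable fun k => |ψ (zeroAtInftySingle k)| := by
    refine summable_of_sum_range_le (c := ‖ψ‖) (fun _ => abs_nonneg _) fun N => ?_
    set s : ℕ → ℝ := fun k => SignType.sign (ψ (zeroAtInftySingle k))
    have h1 : ∑ k ∈ Finset.range N, |ψ (zeroAtInftySingle k)| =
        ψ (∑ k ∈ Finset.range N, s k • zeroAtInftySingle k) := by
      simp [s, map_sum, sign_mul_self]
    rw [h1]
    refine (le_abs_self _).trans ((ψ.le_opNorm _).trans ?_)
    refine mul_le_of_le_one_right (norm_nonneg _)
      (ZeroAtInftyContinuousMap.norm_le_of_forall_abs_le _ zero_le_one fun j => ?_)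
    rw [sum_smul_zeroAtInftySingle_apply]
    split_ifs
    · rcases lt_trichotomy (ψ (zeroAtInftySingle j)) 0 with h | h | h <;> simp [s, h]
    · simp
  refine ⟨fun k => ψ (zeroAtInftySingle k), hsummable, ?_⟩
  · intro y
    have hs : Summable fun k => ψ (zeroAtInftySingle k) * y k := by
      refine Summable.of_norm_bounded (hsummable.mul_right ‖y‖) fun k => ?_
      rw [norm_mul]
      exact mul_le_mul_of_nonneg_left (y.abs_apply_le_norm k) (norm_nonneg _)
    rw [hs.hasSum_iff_tendsto_nat]
    refine ((ψ.continuous.tendsto y).comp y.tendsto_sum_single).congr fun N => ?_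
    simp [map_sum, mul_comm]

/-- Countably many linear functionals, null and somewhere at least one at each point of a convex
set, admit an absolutely summable combination that is bounded below by a positive number. -/
theorem exists_summable_le_tsum_of_tendsto_zero {V : Type*} [AddCommGroup V] [Module ℝ V]
    {C : Set V} (hC : Convex ℝ C) (T : ℕ → V →ₗ[ℝ] ℝ)
    (hT : ∀ x ∈ C, Tendsto (fun k => T k x) atTop (nhds 0)) (hone : ∀ x ∈ C, ∃ k, 1 ≤ T k x) :
    ∃ a : ℕ → ℝ, ∃ s > 0, (Summable fun k => |a k|) ∧ ∀ x ∈ C, s ≤ ∑' k, a k * T k x := by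
  have hconv : Convex ℝ {y : C₀(ℕ, ℝ) | ∃ x ∈ C, ∀ k, y k = T k x} := by
    rintro y ⟨x, hx, hy⟩ y' ⟨x', hx', hy'⟩ α β hα hβ hαβ
    exact ⟨α • x + β • x', hC hx hx' hα hβ hαβ, fun k => by simp [hy, hy']⟩
  obtain ⟨ψ, s, h1, h2⟩ := geometric_hahn_banach_open (convex_ball (0 : C₀(ℕ, ℝ)) 1)
    Metric.isOpen_ball hconv (by
      rw [disjoint_left]
      rintro y hy ⟨x, hx, hyx⟩
      obtain ⟨k, hk⟩ := hone x hx
      have h := (le_abs_self _).trans (ZeroAtInftyContinuousMap.abs_apply_le_norm y k)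
      rw [mem_ball_zero_iff] at hy
      rw [hyx] at h
      linarith)
  obtain ⟨a, ha, hsum⟩ := exists_summable_hasSum_of_dual_zeroAtInfty ψ
  refine ⟨a, s, by simpa using h1 0 (by simp), ha, fun x hx => ?_⟩
  let y : C₀(ℕ, ℝ) :=
    { toFun := fun k => T k x
      continuous_toFun := continuous_of_discreteTopology
      zero_at_infty' := by
        rw [cocompact_eq_cofinite, Nat.cofinite_eq_atTop]
        exact hT x hx }
  have h3 := h2 y ⟨x, hx, fun _ => rfl⟩
  rwa [← (hsum y).tsum_eq] at h3

end NullSequences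

section BoundedRandomVariables

/-- Bounded measurable real functions. -/
def BddMeasurable (X : Ω → ℝ) : Prop := Measurable X ∧ ∃ C : ℝ, ∀ ω, |X ω| ≤ C

namespace BddMeasurable

variable {X Y : Ω → ℝ}

theorem const (m : ℝ) : BddMeasurable fun _ : Ω => m :=
  ⟨measurable_const, |m|, fun _ => le_rfl⟩

theorem add (hX : BddMeasurable X) (hY : BddMeasurable Y) :
    BddMeasurable fun ω => X ω + Y ω := by
  obtain ⟨hXm, C, hC⟩ := hX
  obtain ⟨hYm, C', hC'⟩ := hY
  exact ⟨hXm.add hYm, C + C', fun ω => (abs_add_le _ _).trans (add_le_add (hC ω) (hC' ω))⟩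

theorem const_mul (hX : BddMeasurable X) (c : ℝ) : BddMeasurable fun ω => c * X ω := by
  obtain ⟨hXm, C, hC⟩ := hX
  refine ⟨hXm.const_mul c, |c| * C, fun ω => ?_⟩
  rw [abs_mul]
  exact mul_le_mul_of_nonneg_left (hC ω) (abs_nonneg c)

theorem exists_pos_bound (hX : BddMeasurable X) : ∃ C > 0, ∀ ω, |X ω| ≤ C := by
  obtain ⟨-, C, hC⟩ := hX
  exact ⟨|C| + 1, by positivity, fun ω => (hC ω).trans ((le_abs_self C).trans (by simp))⟩

theorem integrable_mul {P : Measure Ω} {Z : Ω → ℝ} (hX : BddMeasurable X) (hZ : Integrable Z P) :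
    Integrable (fun ω => Z ω * X ω) P := by
  obtain ⟨hXm, C, hC⟩ := hX
  exact hZ.mul_bdd hXm.aestronglyMeasurable (ae_of_all _ hC)

end BddMeasurable

theorem integrable_of_mem_Dens {P : Measure Ω} {Z : Ω → ℝ} (hZ : Z ∈ Dens P) :
    Integrable Z P := by
  obtain ⟨hm, h0, h1⟩ := hZ
  refine ⟨hm.aestronglyMeasurable, ?_⟩
  rw [hasFiniteIntegral_iff_ofReal (ae_of_all _ h0), h1]
  exact ENNReal.one_lt_top

theorem integral_eq_one_of_mem_Dens {P : Measure Ω} {Z : Ω → ℝ} (hZ : Z ∈ Dens P) :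
    ∫ ω, Z ω ∂P = 1 := by
  rw [integral_eq_lintegral_of_nonneg_ae (ae_of_all _ hZ.2.1) hZ.1.aestronglyMeasurable, hZ.2.2]
  rfl

theorem eexp_eq_integral {P : Measure Ω} {Z X : Ω → ℝ}
    (hZX : Integrable (fun ω => Z ω * X ω) P) :
    eexp P Z X = ((∫ ω, Z ω * X ω ∂P : ℝ) : EReal) := by
  have h1 : ∫⁻ ω, ENNReal.ofReal (Z ω * X ω) ∂P ≠ ⊤ := hZX.lintegral_lt_top.ne
  have h2 : ∫⁻ ω, ENNReal.ofReal (-(Z ω * X ω)) ∂P ≠ ⊤ := hZX.neg.lintegral_lt_top.ne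
  rw [eexp, if_neg h2, integral_eq_lintegral_pos_part_sub_lintegral_neg_part hZX, EReal.coe_sub,
    EReal.coe_ennreal_toReal h1, EReal.coe_ennreal_toReal h2]

/-- Dominated convergence for a uniformly bounded sequence converging in measure, tested against
an integrable function. -/
theorem tendsto_integral_mul_of_tendstoInMeasure {P : Measure Ω} {Z : Ω → ℝ}
    (hZ : Integrable Z P) {Xs : ℕ → Ω → ℝ} {X : Ω → ℝ} (hm : ∀ n, Measurable (Xs n))
    (hb : ∀ n ω, |Xs n ω| ≤ 1) (h : TendstoInMeasure P Xs atTop X) :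
    Tendsto (fun n => ∫ ω, Z ω * Xs n ω ∂P) atTop (nhds (∫ ω, Z ω * X ω ∂P)) := by
  refine tendsto_of_subseq_tendsto fun ns hns => ?_
  have hsub : TendstoInMeasure P (fun n => Xs (ns n)) atTop X := fun ε hε => (h ε hε).comp hns
  obtain ⟨ms, -, hms⟩ := hsub.exists_seq_tendsto_ae
  refine ⟨ms, tendsto_integral_of_dominated_convergence (fun ω => |Z ω|)
    (fun n => hZ.1.mul (hm _).aestronglyMeasurable) hZ.abs (fun n => ae_of_all _ fun ω => ?_) ?_⟩
  · rw [norm_mul]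
    exact mul_le_of_le_one_right (norm_nonneg _) (hb _ ω)
  · filter_upwards [hms] with ω hω using hω.const_mul _

end BoundedRandomVariables

section CoherentUtility

/-- Coherent utility functions with the Fatou property on bounded measurable functions. -/
structure IsCoherentFatou (P : Measure Ω) (u : (Ω → ℝ) → ℝ) : Prop where
  superadd : ∀ {X Y : Ω → ℝ}, BddMeasurable X → BddMeasurable Y →
    u X + u Y ≤ u (fun ω => X ω + Y ω)
  mono : ∀ {X Y : Ω → ℝ}, BddMeasurable X → BddMeasurable Y → (∀ ω, X ω ≤ Y ω) → u X ≤ u Y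
  const_mul : ∀ {X : Ω → ℝ}, BddMeasurable X → ∀ c : ℝ, 0 ≤ c →
    u (fun ω => c * X ω) = c * u X
  add_const : ∀ {X : Ω → ℝ}, BddMeasurable X → ∀ m : ℝ, u (fun ω => X ω + m) = u X + m
  fatou : ∀ {Xs : ℕ → Ω → ℝ} {X : Ω → ℝ}, (∀ n, Measurable (Xs n)) → (∀ n ω, |Xs n ω| ≤ 1) →
    BddMeasurable X → TendstoInMeasure P Xs atTop X → limsup (fun n => u (Xs n)) atTop ≤ u X

/-- An infimum of expectations is a coherent utility function with the Fatou property. -/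
theorem isCoherentFatou_of_isGLB {P : Measure Ω} {u : (Ω → ℝ) → ℝ} {D : Set (Ω → ℝ)}
    (hD : D ⊆ Dens P) (hne : D.Nonempty)
    (hu : ∀ X, BddMeasurable X → IsGLB ((fun Z : Ω → ℝ => ∫ ω, Z ω * X ω ∂P) '' D) (u X)) :
    IsCoherentFatou P u := by
  have hle : ∀ {X}, BddMeasurable X → ∀ Z ∈ D, u X ≤ ∫ ω, Z ω * X ω ∂P := fun hX Z hZ =>
    (hu _ hX).1 (mem_image_of_mem _ hZ)
  have hge : ∀ {X} {c : ℝ}, BddMeasurable X → (∀ Z ∈ D, c ≤ ∫ ω, Z ω * X ω ∂P) → c ≤ u X :=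
    fun hX h => (hu _ hX).2 (forall_mem_image.2 h)
  have hint : ∀ {X}, BddMeasurable X → ∀ Z ∈ D, Integrable (fun ω => Z ω * X ω) P :=
    fun hX Z hZ => hX.integrable_mul (integrable_of_mem_Dens (hD hZ))
  have hconst : ∀ m : ℝ, ∀ Z ∈ D, ∫ ω, Z ω * m ∂P = m := fun m Z hZ => by
    rw [integral_mul_const, integral_eq_one_of_mem_Dens (hD hZ), one_mul]
  have hadd : ∀ {X Y}, BddMeasurable X → BddMeasurable Y → ∀ Z ∈ D,
      ∫ ω, Z ω * (X ω + Y ω) ∂P = ∫ ω, Z ω * X ω ∂P + ∫ ω, Z ω * Y ω ∂P :=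
    fun hX hY Z hZ => by
      rw [← integral_add (hint hX Z hZ) (hint hY Z hZ)]
      simp only [mul_add]
  have hmul : ∀ (X : Ω → ℝ) (c : ℝ) (Z : Ω → ℝ),
      ∫ ω, Z ω * (c * X ω) ∂P = c * ∫ ω, Z ω * X ω ∂P := fun X c Z => by
    rw [← integral_const_mul]
    simp only [mul_left_comm]
  have hmono : ∀ {X Y}, BddMeasurable X → BddMeasurable Y → (∀ ω, X ω ≤ Y ω) → ∀ Z ∈ D,
      ∫ ω, Z ω * X ω ∂P ≤ ∫ ω, Z ω * Y ω ∂P := fun hX hY h Z hZ =>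
    integral_mono (hint hX Z hZ) (hint hY Z hZ)
      fun ω => mul_le_mul_of_nonneg_left (h ω) ((hD hZ).2.1 ω)
  refine ⟨fun {X Y} hX hY => ?_, fun {X Y} hX hY h => ?_, fun {X} hX c hc => ?_,
    fun {X} hX m => ?_, fun {Xs X} hm hb hX h => ?_⟩
  · refine hge (hX.add hY) fun Z hZ => ?_
    rw [hadd hX hY Z hZ]
    exact add_le_add (hle hX Z hZ) (hle hY Z hZ)
  · exact hge hY fun Z hZ => (hle hX Z hZ).trans (hmono hX hY h Z hZ)
  · refine le_antisymm ?_ (hge (hX.const_mul c) fun Z hZ => ?_)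
    · rcases hc.eq_or_lt with rfl | hc'
      · obtain ⟨Z, hZ⟩ := hne
        simpa using hle (hX.const_mul 0) Z hZ
      · rw [← div_le_iff₀' hc']
        refine hge hX fun Z hZ => ?_
        rw [div_le_iff₀' hc', ← hmul]
        exact hle (hX.const_mul c) Z hZ
    · rw [hmul]
      exact mul_le_mul_of_nonneg_left (hle hX Z hZ) hc
  · have hXm := hX.add (BddMeasurable.const (Ω := Ω) m)
    refine le_antisymm ?_ (hge hXm fun Z hZ => ?_)
    · rw [← sub_le_iff_le_add]
      refine hge hX fun Z hZ => ?_
      have := hle hXm Z hZ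
      rw [hadd hX (BddMeasurable.const m) Z hZ, hconst m Z hZ] at this
      linarith
    · rw [hadd hX (BddMeasurable.const m) Z hZ, hconst m Z hZ]
      exact add_le_add_left (hle hX Z hZ) m
  · have hXs : ∀ n, BddMeasurable (Xs n) := fun n => ⟨hm n, 1, hb n⟩
    refine hge hX fun Z hZ => ?_
    have hlim := tendsto_integral_mul_of_tendstoInMeasure (integrable_of_mem_Dens (hD hZ)) hm hb h
    rw [← hlim.limsup_eq]
    refine limsup_le_limsup (Eventually.of_forall fun n => hle (hXs n) Z hZ) ?_
      hlim.isBoundedUnder_le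
    refine IsBoundedUnder.isCoboundedUnder_le ⟨-1, eventually_map.2 (Eventually.of_forall
      fun n => hge (hXs n) fun W hW => ?_)⟩
    rw [← hconst (-1) W hW]
    exact hmono (BddMeasurable.const _) (hXs n) (fun ω => (abs_le.1 (hb n ω)).1) W hW

namespace IsCoherentFatou

variable {P : Measure Ω} {u : (Ω → ℝ) → ℝ} {X Y : Ω → ℝ}

theorem map_const (hu : IsCoherentFatou P u) (m : ℝ) : u (fun _ => m) = m := by
  have h0 : u (fun _ => 0) = 0 := by
    simpa using hu.const_mul (BddMeasurable.const (Ω := Ω) 0) 0 le_rfl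
  simpa [h0] using hu.add_const (BddMeasurable.const (Ω := Ω) 0) m

theorem map_le_of_abs_le (hu : IsCoherentFatou P u) (hX : BddMeasurable X) {C : ℝ}
    (h : ∀ ω, |X ω| ≤ C) : u X ≤ C := by
  rw [← hu.map_const C]
  exact hu.mono hX (BddMeasurable.const C) fun ω => (le_abs_self _).trans (h ω)

/-- The acceptable positions are closed under bounded convergence in measure. -/
theorem nonneg_of_tendstoInMeasure (hu : IsCoherentFatou P u) {Xs : ℕ → Ω → ℝ} {M : ℝ}
    (hM : 0 < M) (hm : ∀ n, Measurable (Xs n)) (hb : ∀ n ω, |Xs n ω| ≤ M)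
    (hX : BddMeasurable X) (h : TendstoInMeasure P Xs atTop X) (h0 : ∀ n, 0 ≤ u (Xs n)) :
    0 ≤ u X := by
  have hXs : ∀ n, BddMeasurable (Xs n) := fun n => ⟨hm n, M, hb n⟩
  have hMinv : 0 < M⁻¹ := inv_pos.2 hM
  have hb' : ∀ n ω, |M⁻¹ * Xs n ω| ≤ 1 := fun n ω => by
    rw [abs_mul, abs_of_pos hMinv, inv_mul_le_iff₀ hM, mul_one]
    exact hb n ω
  have hlim : TendstoInMeasure P (fun n ω => M⁻¹ * Xs n ω) atTop fun ω => M⁻¹ * X ω := by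
    rw [tendstoInMeasure_iff_norm] at h ⊢
    intro ε hε
    refine (h (M * ε) (by positivity)).congr fun n => ?_
    congr 1
    ext ω
    rw [mem_ofPred_eq, mem_ofPred_eq, ← mul_sub, norm_mul, Real.norm_of_nonneg hMinv.le,
      le_inv_mul_iff₀ hM]
  have hfatou := hu.fatou (fun n => (hm n).const_mul _) hb' (hX.const_mul _) hlim
  rw [hu.const_mul hX _ hMinv.le] at hfatou
  have hnonneg : 0 ≤ limsup (fun n => u fun ω => M⁻¹ * Xs n ω) atTop := by
    refine le_limsup_of_frequently_le (Frequently.of_forall fun n => ?_)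
      ⟨1, eventually_map.2 (Eventually.of_forall fun n =>
        hu.map_le_of_abs_le ((hXs n).const_mul _) (hb' n))⟩
    rw [hu.const_mul (hXs n) _ hMinv.le]
    exact mul_nonneg hMinv.le (h0 n)
  exact nonneg_of_mul_nonneg_right (hnonneg.trans hfatou) hMinv

theorem nonneg_congr_ae (hu : IsCoherentFatou P u) (hX : BddMeasurable X) (hY : BddMeasurable Y)
    (h : X =ᵐ[P] Y) (h0 : 0 ≤ u X) : 0 ≤ u Y := by
  obtain ⟨M, hM, hb⟩ := hX.exists_pos_bound
  refine hu.nonneg_of_tendstoInMeasure hM (fun _ => hX.1) (fun _ => hb) hY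
    (Xs := fun _ => X) ?_ fun _ => h0
  rw [tendstoInMeasure_iff_norm]
  intro ε hε
  refine tendsto_const_nhds.congr fun _ => Eq.symm ?_
  refine measure_mono_null (fun ω hω => ?_) (ae_iff.1 h)
  intro hXY
  simp only [mem_ofPred_eq, hXY, sub_self, norm_zero] at hω
  linarith

end IsCoherentFatou

end CoherentUtility

section SquareIntegrable

variable {P : Measure Ω}

/-- The functions in `L²` bounded by `r` almost everywhere. -/
def essBall (P : Measure Ω) (r : ℝ) : Set (Lp ℝ 2 P) := {f | ∀ᵐ ω ∂P, |f ω| ≤ r}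

theorem convex_essBall (r : ℝ) : Convex ℝ (essBall P r) := by
  intro f hf g hg α β hα hβ hαβ
  filter_upwards [hf, hg, Lp.coeFn_add (α • f) (β • g), Lp.coeFn_smul α f, Lp.coeFn_smul β g]
    with ω h1 h2 h3 h4 h5
  rw [h3, Pi.add_apply, h4, h5, Pi.smul_apply, Pi.smul_apply]
  exact abs_le.2 (convex_Icc (-r) r (abs_le.1 h1) (abs_le.1 h2) hα hβ hαβ)

theorem isClosed_essBall (r : ℝ) : IsClosed (essBall P r) := by
  refine IsSeqClosed.isClosed fun f g hf hfg => ?_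
  obtain ⟨ns, -, hns⟩ := (tendstoInMeasure_of_tendsto_Lp hfg).exists_seq_tendsto_ae
  filter_upwards [hns, ae_all_iff.2 hf] with ω h1 h2
  exact le_of_tendsto' h1.abs fun n => h2 (ns n)

theorem isBounded_essBall [IsProbabilityMeasure P] {r : ℝ} (hr : 0 ≤ r) :
    Bornology.IsBounded (essBall P r) := by
  rw [isBounded_iff_forall_norm_le]
  exact ⟨_, fun f hf => Lp.norm_le_of_ae_bound hr hf⟩

theorem zero_mem_essBall {r : ℝ} (hr : 0 ≤ r) : (0 : Lp ℝ 2 P) ∈ essBall P r := by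
  filter_upwards [Lp.coeFn_zero ℝ 2 P] with ω h
  rwa [h, Pi.zero_apply, abs_zero]

theorem essBall_zero_subset : essBall P 0 ⊆ {0} := by
  intro f hf
  refine mem_singleton_iff.2 (Lp.ext ?_)
  filter_upwards [hf, Lp.coeFn_zero ℝ 2 P] with ω h1 h2
  rw [h2]
  exact abs_nonpos_iff.1 h1

theorem BddMeasurable.memLp [IsProbabilityMeasure P] {X : Ω → ℝ} (hX : BddMeasurable X) :
    MemLp X 2 P := by
  obtain ⟨hXm, C, hC⟩ := hX
  exact MemLp.of_bound hXm.aestronglyMeasurable C (ae_of_all _ hC)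

theorem L2.inner_eq_integral_mul {f g : Lp ℝ 2 P} {X : Ω → ℝ} (h : g =ᵐ[P] X) :
    inner ℝ f g = ∫ ω, f ω * X ω ∂P := by
  rw [L2.inner_def]
  refine integral_congr_ae ?_
  filter_upwards [h] with ω hω
  simp [hω, mul_comm]

/-- A bound for the functional `⟪f, ·⟫` on `essBall P r` bounds the `L¹` norm of `f`. -/
theorem mul_integral_abs_le_of_inner_le [IsProbabilityMeasure P] {f : Lp ℝ 2 P} {r c : ℝ}
    (hr : 0 ≤ r) (h : ∀ b ∈ essBall P r, inner ℝ f b ≤ c) : r * ∫ ω, |f ω| ∂P ≤ c := by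
  have hsign : ∀ ω, |r * (SignType.sign (f ω) : ℝ)| ≤ r := by
    intro ω
    rcases lt_trichotomy (f ω) 0 with h | h | h <;> simp [h, hr, abs_of_nonneg]
  have hbdd : BddMeasurable fun ω => r * (SignType.sign (f ω) : ℝ) := by
    refine ⟨Measurable.const_mul ?_ r, r, hsign⟩
    have hsm : Measurable fun x : ℝ => ((SignType.sign x : SignType) : ℝ) := by
      have : (fun x : ℝ => ((SignType.sign x : SignType) : ℝ)) =
          fun x => if 0 < x then 1 else if x < 0 then -1 else 0 := by
        ext x
        rcases lt_trichotomy x 0 with h | h | h <;> simp [h, h.le, not_lt.2]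
      rw [this]
      exact Measurable.ite measurableSet_Ioi measurable_const
        (Measurable.ite measurableSet_Iio measurable_const measurable_const)
    exact hsm.comp (Lp.stronglyMeasurable f).measurable
  have hco := hbdd.memLp.coeFn_toLp (μ := P)
  have hmem : hbdd.memLp.toLp _ ∈ essBall P r := by
    filter_upwards [hco] with ω hω
    rw [hω]
    exact hsign ω
  have := h _ hmem
  rw [L2.inner_eq_integral_mul hco] at this
  rw [← integral_const_mul]
  refine le_of_eq_of_le (integral_congr_ae (ae_of_all _ fun ω => ?_)) this
  change r * |f ω| = f ω * (r * (SignType.sign (f ω) : ℝ))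
  rw [mul_left_comm, self_mul_sign]

theorem abs_inner_le_of_mem_essBall [IsProbabilityMeasure P] {f g : Lp ℝ 2 P} {r : ℝ}
    (hg : g ∈ essBall P r) : |inner ℝ f g| ≤ r * ∫ ω, |f ω| ∂P := by
  rw [L2.inner_eq_integral_mul (ae_eq_refl g), ← integral_const_mul, ← Real.norm_eq_abs]
  have hf : Integrable f P := (Lp.memLp f).integrable (by norm_num)
  refine norm_integral_le_of_norm_le (hf.abs.const_mul r) ?_
  filter_upwards [hg] with ω hω
  rw [norm_mul, mul_comm]
  exact mul_le_mul_of_nonneg_right hω (norm_nonneg _)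

/-- An absolutely summable series of integrable functions has an integrable sum, with which
bounded functions can be integrated term by term. -/
theorem exists_integrable_hasSum_integral_mul {F : ℕ → Ω → ℝ} (hF : ∀ k, Integrable (F k) P)
    (hs : Summable fun k => ∫ ω, |F k ω| ∂P) :
    ∃ Z : Ω → ℝ, Integrable Z P ∧ ∀ X : Ω → ℝ, BddMeasurable X →
      HasSum (fun k => ∫ ω, F k ω * X ω ∂P) (∫ ω, Z ω * X ω ∂P) := by
  have hsum : Summable fun k => (hF k).toL1 (F k) := by
    refine Summable.of_norm (hs.congr fun k => ?_)
    rw [L1.norm_of_fun_eq_integral_norm]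
    rfl
  obtain ⟨Z, hZ⟩ := hsum
  refine ⟨Z, L1.integrable_coeFn Z, fun X hX => ?_⟩
  obtain ⟨C, hC0, hC⟩ := hX.exists_pos_bound
  let φ : Lp ℝ 1 P →L[ℝ] ℝ := LinearMap.mkContinuous
    { toFun := fun W => ∫ ω, W ω * X ω ∂P
      map_add' := fun V W => by
        rw [← integral_add (hX.integrable_mul (L1.integrable_coeFn V))
          (hX.integrable_mul (L1.integrable_coeFn W))]
        refine integral_congr_ae ?_
        filter_upwards [Lp.coeFn_add V W] with ω h
        rw [h, Pi.add_apply, add_mul]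
      map_smul' := fun c W => by
        rw [RingHom.id_apply, smul_eq_mul, ← integral_const_mul]
        refine integral_congr_ae ?_
        filter_upwards [Lp.coeFn_smul c W] with ω h
        rw [h, Pi.smul_apply, smul_eq_mul, mul_assoc] } C fun W => by
      rw [L1.norm_eq_integral_norm, ← integral_const_mul]
      refine norm_integral_le_of_norm_le ((L1.integrable_coeFn W).norm.const_mul C)
        (ae_of_all _ fun ω => ?_)
      rw [norm_mul, mul_comm]
      exact mul_le_mul_of_nonneg_right (hC ω) (norm_nonneg _)
  have heq : (fun k => ∫ ω, F k ω * X ω ∂P) = fun k => φ ((hF k).toL1 (F k)) := by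
    ext k
    refine integral_congr_ae ?_
    filter_upwards [(hF k).coeFn_toL1] with ω h
    rw [h]
  rw [heq]
  exact φ.hasSum hZ

end SquareIntegrable

section Duality

variable {P : Measure Ω} {u : (Ω → ℝ) → ℝ} {X : Ω → ℝ}

/-- The classes in `L²` of the bounded functions whose translate by `X` is acceptable for `u`. -/
def acceptableTranslates (P : Measure Ω) (u : (Ω → ℝ) → ℝ) (X : Ω → ℝ) : Set (Lp ℝ 2 P) :=
  {f | ∃ Y : Ω → ℝ, BddMeasurable Y ∧ 0 ≤ u (fun ω => Y ω + X ω) ∧ f =ᵐ[P] Y}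

theorem convex_acceptableTranslates (hu : IsCoherentFatou P u) (hX : BddMeasurable X) :
    Convex ℝ (acceptableTranslates P u X) := by
  rintro f ⟨Y, hY, hYu, hfY⟩ g ⟨W, hW, hWu, hgW⟩ α β hα hβ hαβ
  refine ⟨fun ω => α * Y ω + β * W ω, (hY.const_mul α).add (hW.const_mul β), ?_, ?_⟩
  · have h := hu.superadd ((hY.add hX).const_mul α) ((hW.add hX).const_mul β)
    rw [hu.const_mul (hY.add hX) α hα, hu.const_mul (hW.add hX) β hβ] at h
    have heq : (fun ω => α * (Y ω + X ω) + β * (W ω + X ω)) =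
        fun ω => α * Y ω + β * W ω + X ω := by
      ext ω
      linear_combination X ω * hαβ
    rw [heq] at h
    exact (add_nonneg (mul_nonneg hα hYu) (mul_nonneg hβ hWu)).trans h
  · filter_upwards [hfY, hgW, Lp.coeFn_add (α • f) (β • g), Lp.coeFn_smul α f,
      Lp.coeFn_smul β g] with ω h1 h2 h3 h4 h5
    rw [h3, Pi.add_apply, h4, h5, Pi.smul_apply, Pi.smul_apply, h1, h2, smul_eq_mul, smul_eq_mul]

/-- A representative of an element of `essBall P r` that is bounded by `r` everywhere. -/
theorem exists_bounded_representative {f : Lp ℝ 2 P} {r : ℝ} (hr : 0 ≤ r)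
    (hf : f ∈ essBall P r) :
    ∃ Y : Ω → ℝ, Measurable Y ∧ (∀ ω, |Y ω| ≤ r) ∧ f =ᵐ[P] Y := by
  refine ⟨fun ω => max (-r) (min r (f ω)),
    measurable_const.max (measurable_const.min (Lp.stronglyMeasurable f).measurable),
    fun ω => abs_le.2 ⟨le_max_left _ _, max_le (by linarith) (min_le_left _ _)⟩, ?_⟩
  filter_upwards [hf] with ω hω
  rw [abs_le] at hω
  rw [min_eq_right hω.2, max_eq_right hω.1]

theorem isClosed_acceptableTranslates_inter_essBall (hu : IsCoherentFatou P u)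
    (hX : BddMeasurable X) {r : ℝ} (hr : 0 ≤ r) :
    IsClosed (acceptableTranslates P u X ∩ essBall P r) := by
  refine IsSeqClosed.isClosed fun f g hf hfg => ?_
  have hg : g ∈ essBall P r := (isClosed_essBall r).mem_of_tendsto hfg
    (Eventually.of_forall fun n => (hf n).2)
  obtain ⟨C, hC, hCX⟩ := hX.exists_pos_bound
  obtain ⟨Y, hYm, hYr, hgY⟩ := exists_bounded_representative hr hg
  choose Ys hYsm hYsr hfYs using fun n => exists_bounded_representative hr (hf n).2
  have hYs : ∀ n, BddMeasurable (Ys n) := fun n => ⟨hYsm n, r, hYsr n⟩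
  have hY : BddMeasurable Y := ⟨hYm, r, hYr⟩
  refine ⟨⟨Y, hY, ?_, hgY⟩, hg⟩
  refine hu.nonneg_of_tendstoInMeasure (Xs := fun n ω => Ys n ω + X ω) (M := r + C)
    (by positivity) (fun n => (hYsm n).add hX.1)
    (fun n ω => (abs_add_le _ _).trans (add_le_add (hYsr n ω) (hCX ω))) (hY.add hX) ?_ fun n => ?_
  · have h := (tendstoInMeasure_of_tendsto_Lp hfg).congr hfYs hgY
    rw [tendstoInMeasure_iff_norm] at h ⊢
    simpa using h
  · obtain ⟨W, hW, hWu, hfW⟩ := (hf n).1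
    refine hu.nonneg_congr_ae (hW.add hX) ((hYs n).add hX) ?_ hWu
    filter_upwards [hfW, hfYs n] with ω h1 h2
    rw [← h1, h2]

/-- A position that is not acceptable is strictly separated from the acceptable ones by an
integrable function. -/
theorem exists_integrable_separating [IsProbabilityMeasure P] (hu : IsCoherentFatou P u)
    (hX : BddMeasurable X) (hneg : u X < 0) :
    ∃ Z : Ω → ℝ, Integrable Z P ∧ ∃ s > 0, ∀ Y : Ω → ℝ, BddMeasurable Y → 0 ≤ u Y →
      s + ∫ ω, Z ω * X ω ∂P ≤ ∫ ω, Z ω * Y ω ∂P := by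
  have hconv := convex_acceptableTranslates hu hX
  have h0 : (0 : Lp ℝ 2 P) ∉ acceptableTranslates P u X := by
    rintro ⟨Y, hY, hYu, h0Y⟩
    refine absurd (hu.nonneg_congr_ae (hY.add hX) hX ?_ hYu) (not_le.2 hneg)
    filter_upwards [h0Y, Lp.coeFn_zero ℝ 2 P] with ω h1 h2
    rw [← h1, h2, Pi.zero_apply, zero_add]
  obtain ⟨f, hf2, hf1⟩ := exists_seq_inner_le_two_and_one_lt
    (B := fun n : ℕ => essBall P n) (fun n => convex_essBall _) (fun n => isClosed_essBall _)
    (fun n => isBounded_essBall n.cast_nonneg) (fun n => zero_mem_essBall n.cast_nonneg)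
    (by simpa using essBall_zero_subset (P := P)) hconv
    (fun n => isClosed_acceptableTranslates_inter_essBall hu hX n.cast_nonneg) h0
  have hfL1 : ∀ n : ℕ, n * ∫ ω, |f n ω| ∂P ≤ 2 := fun n =>
    mul_integral_abs_le_of_inner_le n.cast_nonneg (hf2 n)
  have hmem : ∀ g ∈ acceptableTranslates P u X, ∃ n : ℕ, g ∈ essBall P n := by
    rintro g ⟨Y, ⟨-, C, hC⟩, -, hgY⟩
    obtain ⟨n, hn⟩ := exists_nat_ge C
    refine ⟨n, ?_⟩
    filter_upwards [hgY] with ω hω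
    rw [hω]
    exact (hC ω).trans hn
  have hfint : ∀ k, Integrable (f k) P := fun k => (Lp.memLp (f k)).integrable (by norm_num)
  obtain ⟨a, s, hs, ha, hsep⟩ := exists_summable_le_tsum_of_tendsto_zero hconv
    (fun k => innerₗ _ (f k))
    (fun g hg => by
      obtain ⟨m, hm⟩ := hmem g hg
      refine squeeze_zero_norm' (a := fun k : ℕ => m * 2 / (k : ℝ))
        (eventually_atTop.2 ⟨1, fun k hk => ?_⟩) (tendsto_const_div_atTop_nhds_zero_nat _)
      have hk' : (0 : ℝ) < k := by exact_mod_cast hk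
      refine (abs_inner_le_of_mem_essBall hm).trans ?_
      rw [mul_div_assoc]
      refine mul_le_mul_of_nonneg_left ?_ m.cast_nonneg
      rw [le_div_iff₀' hk']
      exact hfL1 k)
    (fun g hg => by
      obtain ⟨n, hn⟩ := hmem g hg
      obtain ⟨k, hk⟩ := hf1 n g ⟨hg, hn⟩
      exact ⟨k, hk.le⟩)
  obtain ⟨Z, hZ, hZsum⟩ := exists_integrable_hasSum_integral_mul (P := P)
    (F := fun k ω => a k * f k ω) (fun k => (hfint k).const_mul _) (by
      refine Summable.of_nonneg_of_le (fun k => integral_nonneg fun ω => abs_nonneg _)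
        (fun k => ?_) (ha.mul_right (2 + ∫ ω, |f 0 ω| ∂P))
      simp_rw [abs_mul]
      rw [integral_const_mul]
      refine mul_le_mul_of_nonneg_left ?_ (abs_nonneg _)
      have hnn : ∀ j, 0 ≤ ∫ ω, |f j ω| ∂P := fun j => integral_nonneg fun ω => abs_nonneg _
      rcases Nat.eq_zero_or_pos k with rfl | hk
      · linarith
      · have h1 : (1 : ℝ) ≤ k := by exact_mod_cast hk
        nlinarith [hfL1 k, hnn k, hnn 0])
  refine ⟨Z, hZ, s, hs, fun Y hY hYu => ?_⟩
  have hW : BddMeasurable fun ω => Y ω + -1 * X ω := hY.add (hX.const_mul (-1))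
  have hco := hW.memLp.coeFn_toLp (μ := P)
  have h := hsep (hW.memLp.toLp _) ⟨_, hW, by simpa using hYu, hco⟩
  have heq : ∀ k, a k * innerₗ _ (f k) (hW.memLp.toLp _) =
      ∫ ω, a k * f k ω * (Y ω + -1 * X ω) ∂P := fun k => by
    rw [innerₗ_apply_apply, L2.inner_eq_integral_mul hco, ← integral_const_mul]
    simp only [mul_assoc]
  rw [tsum_congr heq, (hZsum _ hW).tsum_eq] at h
  have hsub : ∫ ω, Z ω * (Y ω + -1 * X ω) ∂P = ∫ ω, Z ω * Y ω ∂P - ∫ ω, Z ω * X ω ∂P := by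
    rw [← integral_sub (hY.integrable_mul hZ) (hX.integrable_mul hZ)]
    congr 1
    ext ω
    ring
  linarith

/-- A position that is not acceptable has negative expectation under some density under which
all acceptable positions have nonnegative expectation. -/
theorem exists_mem_Dens_separating [IsProbabilityMeasure P] (hu : IsCoherentFatou P u)
    (hX : BddMeasurable X) (hneg : u X < 0) :
    ∃ Z ∈ Dens P, ∫ ω, Z ω * X ω ∂P < 0 ∧
      ∀ Y : Ω → ℝ, BddMeasurable Y → 0 ≤ u Y → 0 ≤ ∫ ω, Z ω * Y ω ∂P := by
  obtain ⟨Z, hZ, s, hs, hsep⟩ := exists_integrable_separating hu hX hneg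
  have hmul : ∀ (Y : Ω → ℝ) (c : ℝ), ∫ ω, Z ω * (c * Y ω) ∂P = c * ∫ ω, Z ω * Y ω ∂P :=
    fun Y c => by
      rw [← integral_const_mul]
      simp only [mul_left_comm]
  have hXneg : ∫ ω, Z ω * X ω ∂P < 0 := by
    have h := hsep (fun _ => 0) (BddMeasurable.const 0) (hu.map_const 0).ge
    simp only [mul_zero, integral_zero] at h
    linarith
  have hacc : ∀ Y : Ω → ℝ, BddMeasurable Y → 0 ≤ u Y → 0 ≤ ∫ ω, Z ω * Y ω ∂P := by
    intro Y hY hYu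
    by_contra! hlt
    have hc : 0 ≤ (∫ ω, Z ω * X ω ∂P) / ∫ ω, Z ω * Y ω ∂P :=
      div_nonneg_of_nonpos hXneg.le hlt.le
    have h := hsep _ (hY.const_mul _) (by
      rw [hu.const_mul hY _ hc]
      exact mul_nonneg hc hYu)
    rw [hmul, div_mul_cancel₀ _ hlt.ne] at h
    linarith
  have hpos : 0 ≤ᵐ[P] Z := by
    refine ae_nonneg_of_forall_setIntegral_nonneg hZ fun t ht _ => ?_
    have hind : BddMeasurable (t.indicator fun _ : Ω => (1 : ℝ)) :=
      ⟨measurable_const.indicator ht, 1, fun ω => by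
        by_cases h : ω ∈ t <;> simp [h]⟩
    have h := hacc _ hind (by
      rw [← hu.map_const 0]
      exact hu.mono (BddMeasurable.const 0) hind
        fun ω => indicator_nonneg (fun _ _ => zero_le_one) ω)
    rw [← integral_indicator ht]
    convert h using 3 with ω
    by_cases h : ω ∈ t <;> simp [h]
  have hint : 0 < ∫ ω, Z ω ∂P := by
    obtain ⟨C, hC, hCX⟩ := hX.exists_pos_bound
    have h : 0 ≤ ∫ ω, (Z ω * X ω + Z ω * C) ∂P := by
      refine integral_nonneg_of_ae ?_
      filter_upwards [hpos] with ω hω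
      rw [← mul_add]
      exact mul_nonneg hω (by linarith [(abs_le.1 (hCX ω)).1])
    rw [integral_add (hX.integrable_mul hZ) (hZ.mul_const C), integral_mul_const] at h
    by_contra! hle
    nlinarith
  set m := ∫ ω, Z ω ∂P with hm
  have hinv : 0 < m⁻¹ := inv_pos.2 hint
  obtain ⟨W, hWm, hZW⟩ := hZ.1.aemeasurable
  have hae : (fun ω => m⁻¹ * max 0 (W ω)) =ᵐ[P] fun ω => m⁻¹ * Z ω := by
    filter_upwards [hpos, hZW] with ω h1 h2
    rw [← h2, max_eq_right (by exact h1)]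
  have hE : ∀ Y : Ω → ℝ, ∫ ω, m⁻¹ * max 0 (W ω) * Y ω ∂P = m⁻¹ * ∫ ω, Z ω * Y ω ∂P := by
    intro Y
    rw [← integral_const_mul]
    refine integral_congr_ae ?_
    filter_upwards [hae] with ω hω
    rw [hω, mul_assoc]
  refine ⟨fun ω => m⁻¹ * max 0 (W ω), ⟨(measurable_const.max hWm).const_mul _,
    fun ω => mul_nonneg hinv.le (le_max_left _ _), ?_⟩, ?_, fun Y hY hYu => ?_⟩
  · rw [← ofReal_integral_eq_lintegral_ofReal ((hZ.const_mul m⁻¹).congr hae.symm)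
      (ae_of_all _ fun ω => mul_nonneg hinv.le (le_max_left _ _)), integral_congr_ae hae,
      integral_const_mul, ← hm, inv_mul_cancel₀ hint.ne', ENNReal.ofReal_one]
  · rw [hE]
    exact mul_neg_of_pos_of_neg hinv hXneg
  · rw [hE]
    exact mul_nonneg hinv.le (hacc Y hY hYu)

/-- The densities whose expectations dominate `u`. -/
def dominatingDens (P : Measure Ω) (u : (Ω → ℝ) → ℝ) : Set (Ω → ℝ) :=
  {Z | Z ∈ Dens P ∧ ∀ X : Ω → ℝ, BddMeasurable X → u X ≤ ∫ ω, Z ω * X ω ∂P}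

theorem exists_mem_dominatingDens_lt [IsProbabilityMeasure P] (hu : IsCoherentFatou P u)
    (hX : BddMeasurable X) {c : ℝ} (hc : u X < c) :
    ∃ Z ∈ dominatingDens P u, ∫ ω, Z ω * X ω ∂P < c := by
  obtain ⟨Z, hZ, hZX, hacc⟩ := exists_mem_Dens_separating hu
    (hX.add (BddMeasurable.const (-c))) (by rw [hu.add_const hX]; linarith)
  have hshift : ∀ Y : Ω → ℝ, BddMeasurable Y → ∀ m : ℝ,
      ∫ ω, Z ω * (Y ω + m) ∂P = ∫ ω, Z ω * Y ω ∂P + m := by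
    intro Y hY m
    have hZi := integrable_of_mem_Dens hZ
    simp only [mul_add]
    rw [integral_add (hY.integrable_mul hZi) (hZi.mul_const m), integral_mul_const,
      integral_eq_one_of_mem_Dens hZ, one_mul]
  rw [hshift X hX] at hZX
  refine ⟨Z, ⟨hZ, fun Y hY => ?_⟩, by linarith⟩
  have h := hacc _ (hY.add (BddMeasurable.const (-u Y))) (by rw [hu.add_const hY]; simp)
  rw [hshift Y hY] at h
  linarith

theorem isGLB_integral_dominatingDens [IsProbabilityMeasure P] (hu : IsCoherentFatou P u)
    (hX : BddMeasurable X) :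
    IsGLB ((fun Z : Ω → ℝ => ∫ ω, Z ω * X ω ∂P) '' dominatingDens P u) (u X) := by
  refine ⟨forall_mem_image.2 fun Z hZ => hZ.2 X hX, fun c hc => le_of_forall_gt fun d hd => ?_⟩
  obtain ⟨Z, hZ, hlt⟩ := exists_mem_dominatingDens_lt hu hX hd
  exact (hc (mem_image_of_mem _ hZ)).trans_lt hlt

theorem coe_eq_iInf_eexp_iff_isGLB {D : Set (Ω → ℝ)} (hD : D ⊆ Dens P) (hX : BddMeasurable X)
    {r : ℝ} : (r : EReal) = ⨅ Z ∈ D, eexp P Z X ↔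
      IsGLB ((fun Z : Ω → ℝ => ∫ ω, Z ω * X ω ∂P) '' D) r := by
  have hE : ∀ Z ∈ D, eexp P Z X = ((∫ ω, Z ω * X ω ∂P : ℝ) : EReal) := fun Z hZ =>
    eexp_eq_integral (hX.integrable_mul (integrable_of_mem_Dens (hD hZ)))
  have hlb : ∀ c : ℝ, (c : EReal) ≤ ⨅ Z ∈ D, eexp P Z X ↔
      c ∈ lowerBounds ((fun Z : Ω → ℝ => ∫ ω, Z ω * X ω ∂P) '' D) := by
    intro c
    rw [le_iInf₂_iff, mem_lowerBounds, forall_mem_image]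
    refine forall₂_congr fun Z hZ => ?_
    rw [hE Z hZ, EReal.coe_le_coe_iff]
  refine ⟨fun h => ⟨(hlb r).1 h.le, fun c hc => ?_⟩,
    fun h => le_antisymm ((hlb r).2 h.1) ?_⟩
  · rw [← EReal.coe_le_coe_iff, h]
    exact (hlb c).2 hc
  · by_contra! hlt
    obtain ⟨d, hrd, hd⟩ := EReal.lt_iff_exists_real_btwn.1 hlt
    exact absurd (h.2 ((hlb d).1 hd.le)) (not_le.2 (EReal.coe_lt_coe_iff.1 hrd))

end Duality

/-- Basic representation theorem.
A map `u` on `L^∞(Ω, ℱ, P)` satisfies superadditivity, monotonicity, positive homogeneity,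
translation invariance and the Fatou property if and only if it is of the form
`u(X) = inf_{Q ∈ D} E_Q[X]` for a nonempty set `D ⊆ 𝒫` of probability measures absolutely
continuous w.r.t. `P` (identified with their densities). -/
theorem stmt_0 (P : Measure Ω) [IsProbabilityMeasure P] (u : (Ω → ℝ) → ℝ) :
    ((∀ X Y : Ω → ℝ, Measurable X → (∃ C : ℝ, ∀ ω, |X ω| ≤ C) →
        Measurable Y → (∃ C : ℝ, ∀ ω, |Y ω| ≤ C) →
        u X + u Y ≤ u (fun ω => X ω + Y ω)) ∧
      (∀ X Y : Ω → ℝ, Measurable X → (∃ C : ℝ, ∀ ω, |X ω| ≤ C) →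
        Measurable Y → (∃ C : ℝ, ∀ ω, |Y ω| ≤ C) →
        (∀ ω, X ω ≤ Y ω) → u X ≤ u Y) ∧
      (∀ X : Ω → ℝ, Measurable X → (∃ C : ℝ, ∀ ω, |X ω| ≤ C) →
        ∀ c : ℝ, 0 ≤ c → u (fun ω => c * X ω) = c * u X) ∧
      (∀ X : Ω → ℝ, Measurable X → (∃ C : ℝ, ∀ ω, |X ω| ≤ C) →
        ∀ m : ℝ, u (fun ω => X ω + m) = u X + m) ∧
      (∀ (Xs : ℕ → Ω → ℝ) (X : Ω → ℝ), (∀ n, Measurable (Xs n)) →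
        (∀ n ω, |Xs n ω| ≤ 1) → Measurable X → (∃ C : ℝ, ∀ ω, |X ω| ≤ C) →
        TendstoInMeasure P Xs atTop X →
        Filter.limsup (fun n => u (Xs n)) atTop ≤ u X)) ↔
    ∃ D : Set (Ω → ℝ), D ⊆ Dens P ∧ D.Nonempty ∧
      ∀ X : Ω → ℝ, Measurable X → (∃ C : ℝ, ∀ ω, |X ω| ≤ C) →
        (u X : EReal) = ⨅ Z ∈ D, eexp P Z X := by
  constructor
  · rintro ⟨hadd, hmono, hmul, htrans, hfatou⟩
    have hu : IsCoherentFatou P u :=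
      { superadd := fun hX hY => hadd _ _ hX.1 hX.2 hY.1 hY.2
        mono := fun hX hY => hmono _ _ hX.1 hX.2 hY.1 hY.2
        const_mul := fun hX => hmul _ hX.1 hX.2
        add_const := fun hX => htrans _ hX.1 hX.2
        fatou := fun hm hb hX => hfatou _ _ hm hb hX.1 hX.2 }
    have hD : dominatingDens P u ⊆ Dens P := fun Z hZ => hZ.1
    obtain ⟨Z, hZ, -⟩ := exists_mem_dominatingDens_lt hu (BddMeasurable.const 0) (lt_add_one _)
    exact ⟨dominatingDens P u, hD, ⟨Z, hZ⟩, fun X hX hXb =>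
      (coe_eq_iInf_eexp_iff_isGLB hD ⟨hX, hXb⟩).2 (isGLB_integral_dominatingDens hu ⟨hX, hXb⟩)⟩
  · rintro ⟨D, hD, hne, hu⟩
    have h : IsCoherentFatou P u := isCoherentFatou_of_isGLB hD hne fun X hX =>
      (coe_eq_iInf_eexp_iff_isGLB hD hX).1 (hu X hX.1 hX.2)
    exact ⟨fun X Y hX hXb hY hYb => h.superadd ⟨hX, hXb⟩ ⟨hY, hYb⟩,
      fun X Y hX hXb hY hYb => h.mono ⟨hX, hXb⟩ ⟨hY, hYb⟩,
      fun X hX hXb => h.const_mul ⟨hX, hXb⟩,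
      fun X hX hXb => h.add_const ⟨hX, hXb⟩,
      fun Xs X hm hb hX hXb => h.fatou hm hb ⟨hX, hXb⟩⟩
end

section
/- Let D_1, …, D_N ⊆ 𝒫 be sets satisfying L^1_w(D_n) = L^1_s(D_n) for each n. Then: (i) if D = Σ_{n=1}^N a_n D_n is a convex combination (a_n ≥ 0, Σ_n a_n = 1), then L^1_w(D) = L^1_s(D); (ii) if D = conv(D_1 ∪ … ∪ D_N), then L^1_w(D) = L^1_s(D). -/
open MeasureTheory Filter Set
open scoped ENNReal

variable {Ω : Type*} [MeasurableSpace Ω]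

section

variable {P : Measure Ω}

lemma le_tailSup {D : Set (Ω → ℝ)} {Z : Ω → ℝ} (hZ : Z ∈ D) (X : Ω → ℝ) (n : ℕ) :
    ∫⁻ ω in {ω | (n : ℝ) < |X ω|}, ENNReal.ofReal (Z ω * |X ω|) ∂P ≤ tailSup P D X n :=
  le_iSup₂ (f := fun Z (_ : Z ∈ D) =>
    ∫⁻ ω in {ω | (n : ℝ) < |X ω|}, ENNReal.ofReal (Z ω * |X ω|) ∂P) Z hZ

lemma eexp_of_integrable {Z X : Ω → ℝ} (h : Integrable (fun ω => Z ω * X ω) P) :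
    eexp P Z X = ((∫ ω, Z ω * X ω ∂P : ℝ) : EReal) := by
  have hpos : ∫⁻ ω, ENNReal.ofReal (Z ω * X ω) ∂P ≠ ⊤ := h.lintegral_lt_top.ne
  have hneg : ∫⁻ ω, ENNReal.ofReal (-(Z ω * X ω)) ∂P ≠ ⊤ := h.neg.lintegral_lt_top.ne
  rw [eexp, if_neg hneg, integral_eq_lintegral_pos_part_sub_lintegral_neg_part h,
    EReal.coe_sub, EReal.coe_ennreal_toReal hpos, EReal.coe_ennreal_toReal hneg]

lemma lintegral_neg_ne_top_of_bot_lt_eexp {Z X : Ω → ℝ} (h : ⊥ < eexp P Z X) :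
    ∫⁻ ω, ENNReal.ofReal (-(Z ω * X ω)) ∂P ≠ ⊤ := by
  intro htop
  simp [eexp, htop] at h

lemma integrable_of_bot_lt_eexp {Z X : Ω → ℝ} (hZ : Measurable Z) (hX : Measurable X)
    (h : ⊥ < eexp P Z X) (h' : ⊥ < eexp P Z (fun ω => -X ω)) :
    Integrable (fun ω => Z ω * X ω) P := by
  have hneg := lintegral_neg_ne_top_of_bot_lt_eexp h
  have hpos := lintegral_neg_ne_top_of_bot_lt_eexp h'
  simp only [mul_neg, neg_neg] at hpos
  refine ⟨(hZ.mul hX).aestronglyMeasurable, ?_⟩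
  rw [hasFiniteIntegral_iff_norm]
  calc ∫⁻ ω, ENNReal.ofReal ‖Z ω * X ω‖ ∂P
      ≤ ∫⁻ ω, (ENNReal.ofReal (Z ω * X ω) + ENNReal.ofReal (-(Z ω * X ω))) ∂P := by
        refine lintegral_mono fun ω => ?_
        rcases abs_cases (Z ω * X ω) with h | h <;> rw [Real.norm_eq_abs, h.1]
        · exact le_self_add
        · exact le_add_self
    _ = _ := lintegral_add_left (hZ.mul hX).ennreal_ofReal _
    _ < ⊤ := ENNReal.add_lt_top.2 ⟨hpos.lt_top, hneg.lt_top⟩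

lemma EReal.exists_real_le_of_bot_lt {x : EReal} (h : ⊥ < x) : ∃ c : ℝ, (c : EReal) ≤ x := by
  obtain ⟨c, -, hc⟩ := EReal.lt_iff_exists_real_btwn.1 h
  exact ⟨c, hc.le⟩

/-- The weak space consists of the variables with uniformly bounded expectations. -/
lemma mem_Lw_iff {D : Set (Ω → ℝ)} (hD : D ⊆ Dens P) {X : Ω → ℝ} :
    X ∈ Lw P D ↔ Measurable X ∧ ∃ C : ℝ, ∀ Z ∈ D,
      Integrable (fun ω => Z ω * X ω) P ∧ |∫ ω, Z ω * X ω ∂P| ≤ C := by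
  constructor
  · rintro ⟨hX, h, h'⟩
    refine ⟨hX, ?_⟩
    obtain ⟨c, hc⟩ := EReal.exists_real_le_of_bot_lt h
    obtain ⟨c', hc'⟩ := EReal.exists_real_le_of_bot_lt h'
    refine ⟨max (-c) (-c'), fun Z hZ => ?_⟩
    have hle : (c : EReal) ≤ eexp P Z X := hc.trans (iInf₂_le Z hZ)
    have hle' : (c' : EReal) ≤ eexp P Z (fun ω => -X ω) := hc'.trans (iInf₂_le Z hZ)
    have hint := integrable_of_bot_lt_eexp (hD hZ).1 hX
      ((EReal.bot_lt_coe c).trans_le hle) ((EReal.bot_lt_coe c').trans_le hle')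
    have hint' : Integrable (fun ω => Z ω * -X ω) P := by simpa using hint.neg
    rw [eexp_of_integrable hint, EReal.coe_le_coe_iff] at hle
    rw [eexp_of_integrable hint', EReal.coe_le_coe_iff] at hle'
    simp only [mul_neg, integral_neg] at hle'
    refine ⟨hint, abs_le'.2 ⟨?_, ?_⟩⟩
    · exact le_max_of_le_right (by linarith)
    · exact le_max_of_le_left (by linarith)
  · rintro ⟨hX, C, hC⟩
    refine ⟨hX, (EReal.bot_lt_coe (-C)).trans_le (le_iInf₂ fun Z hZ => ?_),
      (EReal.bot_lt_coe (-C)).trans_le (le_iInf₂ fun Z hZ => ?_)⟩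
    · rw [eexp_of_integrable (hC Z hZ).1, EReal.coe_le_coe_iff]
      exact (abs_le.1 (hC Z hZ).2).1
    · have hint' : Integrable (fun ω => Z ω * -X ω) P := by simpa using (hC Z hZ).1.neg
      rw [eexp_of_integrable hint', EReal.coe_le_coe_iff]
      simp only [mul_neg, integral_neg]
      exact neg_le_neg (abs_le.1 (hC Z hZ).2).2

lemma Lw_anti {D D' : Set (Ω → ℝ)} (h : D ⊆ D') : Lw P D' ⊆ Lw P D := fun _ hX =>
  ⟨hX.1, hX.2.1.trans_le (biInf_mono fun _ hZ => h hZ),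
    hX.2.2.trans_le (biInf_mono fun _ hZ => h hZ)⟩

lemma lintegral_le_add_tail {Z X : Ω → ℝ} (hZ : Z ∈ Dens P) (hX : Measurable X) (n : ℕ) :
    ∫⁻ ω, ENNReal.ofReal (Z ω * |X ω|) ∂P ≤
      n + ∫⁻ ω in {ω | (n : ℝ) < |X ω|}, ENNReal.ofReal (Z ω * |X ω|) ∂P := by
  have hS : MeasurableSet {ω | (n : ℝ) < |X ω|} := measurableSet_lt measurable_const hX.abs
  rw [← lintegral_add_compl _ hS, add_comm]
  gcongr
  calc ∫⁻ ω in {ω | (n : ℝ) < |X ω|}ᶜ, ENNReal.ofReal (Z ω * |X ω|) ∂P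
      ≤ ∫⁻ ω in {ω | (n : ℝ) < |X ω|}ᶜ, n * ENNReal.ofReal (Z ω) ∂P := by
        refine setLIntegral_mono (hZ.1.ennreal_ofReal.const_mul _) fun ω hω => ?_
        have hω' : |X ω| ≤ n := not_lt.1 hω
        rw [ENNReal.ofReal_mul (hZ.2.1 ω), mul_comm]
        gcongr
        simpa using ENNReal.ofReal_le_ofReal hω'
    _ ≤ ∫⁻ ω, n * ENNReal.ofReal (Z ω) ∂P := setLIntegral_le_lintegral _ _
    _ = n := by rw [lintegral_const_mul _ hZ.1.ennreal_ofReal, hZ.2.2, mul_one]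

lemma Ls_subset_Lw {D : Set (Ω → ℝ)} (hD : D ⊆ Dens P) : Ls P D ⊆ Lw P D := by
  rintro X ⟨hX, hT⟩
  rw [mem_Lw_iff hD]
  refine ⟨hX, ?_⟩
  obtain ⟨n, hn⟩ := (hT.eventually (ge_mem_nhds (zero_lt_one' ℝ≥0∞))).exists
  refine ⟨n + 1, fun Z hZ => ?_⟩
  have hnorm : ∀ ω, ‖Z ω * X ω‖ = Z ω * |X ω| := fun ω => by
    rw [Real.norm_eq_abs, abs_mul, abs_of_nonneg ((hD hZ).2.1 ω)]
  have hle : ∫⁻ ω, ENNReal.ofReal ‖Z ω * X ω‖ ∂P ≤ n + 1 := by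
    simp only [hnorm]
    refine (lintegral_le_add_tail (hD hZ) hX n).trans ?_
    gcongr
    exact (le_tailSup hZ X n).trans hn
  have htop : (n + 1 : ℝ≥0∞) ≠ ⊤ := by simp
  refine ⟨⟨((hD hZ).1.mul hX).aestronglyMeasurable, ?_⟩, ?_⟩
  · rw [hasFiniteIntegral_iff_norm]
    exact hle.trans_lt htop.lt_top
  · refine (norm_integral_le_lintegral_norm (μ := P) (fun ω => Z ω * X ω)).trans ?_
    simpa [ENNReal.toReal_add] using ENNReal.toReal_mono htop hle

lemma convex_Dens : Convex ℝ (Dens P) := by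
  intro Z hZ W hW a b ha hb hab
  refine ⟨(hZ.1.const_mul a).add (hW.1.const_mul b), fun ω =>
    add_nonneg (mul_nonneg ha (hZ.2.1 ω)) (mul_nonneg hb (hW.2.1 ω)), ?_⟩
  have h : ∀ ω, ENNReal.ofReal ((a • Z + b • W) ω) =
      ENNReal.ofReal a * ENNReal.ofReal (Z ω) + ENNReal.ofReal b * ENNReal.ofReal (W ω) := by
    intro ω
    rw [← ENNReal.ofReal_mul ha, ← ENNReal.ofReal_mul hb,
      ← ENNReal.ofReal_add (mul_nonneg ha (hZ.2.1 ω)) (mul_nonneg hb (hW.2.1 ω))]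
    rfl
  simp only [h]
  rw [lintegral_add_left (hZ.1.ennreal_ofReal.const_mul _),
    lintegral_const_mul _ hZ.1.ennreal_ofReal, lintegral_const_mul _ hW.1.ennreal_ofReal,
    hZ.2.2, hW.2.2, mul_one, mul_one, ← ENNReal.ofReal_add ha hb, hab, ENNReal.ofReal_one]

lemma convexComb_subset_Dens {ι : Type*} [Fintype ι] {Ds : ι → Set (Ω → ℝ)}
    (hsub : ∀ n, Ds n ⊆ Dens P) {a : ι → ℝ} (ha : ∀ n, 0 ≤ a n) (hsum : ∑ n, a n = 1) :
    {Z | ∃ W : ι → Ω → ℝ, (∀ n, W n ∈ Ds n) ∧ Z = fun ω => ∑ n, a n * W n ω} ⊆ Dens P := by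
  rintro Z ⟨W, hW, rfl⟩
  have h := convex_Dens.sum_mem (t := Finset.univ) (fun n _ => ha n) hsum
    (fun n _ => hsub n (hW n))
  convert h using 1
  ext ω
  simp

lemma lintegral_sum_mul_abs {ι : Type*} [Fintype ι] (μ : Measure Ω) {a : ι → ℝ}
    (ha : ∀ n, 0 ≤ a n) {W : ι → Ω → ℝ} (hW : ∀ n, W n ∈ Dens P) {X : Ω → ℝ}
    (hX : Measurable X) :
    ∫⁻ ω, ENNReal.ofReal ((∑ n, a n * W n ω) * |X ω|) ∂μ =
      ∑ n, ENNReal.ofReal (a n) * ∫⁻ ω, ENNReal.ofReal (W n ω * |X ω|) ∂μ := by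
  have hm : ∀ n, Measurable fun ω => ENNReal.ofReal (W n ω * |X ω|) := fun n =>
    ((hW n).1.mul hX.abs).ennreal_ofReal
  simp only [← lintegral_const_mul _ (hm _)]
  rw [← lintegral_finsetSum _ fun n _ => (hm n).const_mul _]
  refine lintegral_congr fun ω => ?_
  simp only [← ENNReal.ofReal_mul (ha _)]
  rw [Finset.sum_mul, ENNReal.ofReal_sum_of_nonneg]
  · simp only [mul_assoc]
  · exact fun n _ => mul_nonneg (mul_nonneg (ha n) ((hW n).2.1 ω)) (abs_nonneg _)

lemma tailSup_convexComb_le {ι : Type*} [Fintype ι] {Ds : ι → Set (Ω → ℝ)}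
    (hsub : ∀ n, Ds n ⊆ Dens P) {a : ι → ℝ} (ha : ∀ n, 0 ≤ a n) {X : Ω → ℝ}
    (hX : Measurable X) (k : ℕ) :
    tailSup P {Z | ∃ W : ι → Ω → ℝ, (∀ n, W n ∈ Ds n) ∧ Z = fun ω => ∑ n, a n * W n ω} X k ≤
      ∑ n, ENNReal.ofReal (a n) * tailSup P (Ds n) X k := by
  refine iSup₂_le ?_
  rintro Z ⟨W, hW, rfl⟩
  rw [lintegral_sum_mul_abs _ ha (fun n => hsub n (hW n)) hX]
  gcongr with n
  exact le_tailSup (hW n) X k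

/-- Membership in the weak space of a convex combination passes to every summand of positive
weight. -/
lemma mem_Lw_of_mem_Lw_convexComb {ι : Type*} [Fintype ι] {Ds : ι → Set (Ω → ℝ)}
    (hsub : ∀ n, Ds n ⊆ Dens P) (hne : ∀ n, (Ds n).Nonempty) {a : ι → ℝ} (ha : ∀ n, 0 ≤ a n)
    (hsum : ∑ n, a n = 1) {X : Ω → ℝ}
    (hX : X ∈ Lw P {Z | ∃ W : ι → Ω → ℝ, (∀ n, W n ∈ Ds n) ∧ Z = fun ω => ∑ n, a n * W n ω})
    {n : ι} (hn : 0 < a n) : X ∈ Lw P (Ds n) := by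
  classical
  rw [mem_Lw_iff (convexComb_subset_Dens hsub ha hsum)] at hX
  obtain ⟨hXm, C, hC⟩ := hX
  rw [mem_Lw_iff (hsub n)]
  have key : ∀ W : ι → Ω → ℝ, (∀ m, W m ∈ Ds m) → Integrable (fun ω => W n ω * X ω) P := by
    intro W hW
    have hint := (hC _ ⟨W, hW, rfl⟩).1.const_mul (a n)⁻¹
    refine hint.mono ((hsub n (hW n)).1.mul hXm).aestronglyMeasurable (ae_of_all _ fun ω => ?_)
    have hW0 : ∀ m, 0 ≤ a m * W m ω := fun m => mul_nonneg (ha m) ((hsub m (hW m)).2.1 ω)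
    have hle : a n * W n ω ≤ ∑ m, a m * W m ω :=
      Finset.single_le_sum (f := fun m => a m * W m ω) (fun m _ => hW0 m) (Finset.mem_univ n)
    rw [← mul_assoc, norm_mul, norm_mul]
    gcongr
    rw [Real.norm_of_nonneg ((hsub n (hW n)).2.1 ω),
      Real.norm_of_nonneg (mul_nonneg (inv_nonneg.2 hn.le) (Finset.sum_nonneg fun m _ => hW0 m)),
      le_inv_mul_iff₀ hn]
    exact hle
  choose W₀ hW₀ using hne
  refine ⟨hXm, (a n)⁻¹ * (C + C) + |∫ ω, W₀ n ω * X ω ∂P|, fun V hV => ?_⟩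
  have hW : ∀ m, Function.update W₀ n V m ∈ Ds m := by
    intro m
    rcases eq_or_ne m n with rfl | h
    · simpa using hV
    · simpa [h] using hW₀ m
  have hVint : Integrable (fun ω => V ω * X ω) P := by simpa using key _ hW
  obtain ⟨hi, hb⟩ := hC _ ⟨_, hW, rfl⟩
  obtain ⟨hi₀, hb₀⟩ := hC _ ⟨W₀, hW₀, rfl⟩
  refine ⟨hVint, ?_⟩
  have hpt : ∀ ω, V ω * X ω = (a n)⁻¹ * ((∑ m, a m * Function.update W₀ n V m ω) * X ω -
      (∑ m, a m * W₀ m ω) * X ω) + W₀ n ω * X ω := by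
    intro ω
    have hdiff : (∑ m, a m * Function.update W₀ n V m ω) - ∑ m, a m * W₀ m ω =
        a n * (V ω - W₀ n ω) := by
      rw [← Finset.sum_sub_distrib, Finset.sum_eq_single n]
      · simp [mul_sub]
      · intro m _ hm
        simp [hm]
      · simp
    rw [← sub_mul, hdiff]
    field_simp
    ring
  have hint : ∫ ω, V ω * X ω ∂P =
      (a n)⁻¹ * (∫ ω, (∑ m, a m * Function.update W₀ n V m ω) * X ω ∂P -
      ∫ ω, (∑ m, a m * W₀ m ω) * X ω ∂P) + ∫ ω, W₀ n ω * X ω ∂P := by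
    rw [← integral_sub hi hi₀, ← integral_const_mul]
    exact (integral_congr_ae (ae_of_all _ hpt)).trans
      (integral_add ((hi.sub hi₀).const_mul _) (key W₀ hW₀))
  rw [hint]
  refine (abs_add_le _ _).trans ?_
  gcongr
  rw [abs_mul, abs_of_pos (inv_pos.2 hn)]
  gcongr
  exact (abs_sub _ _).trans (add_le_add hb hb₀)

lemma convex_setOf_lintegral_le (μ : Measure Ω) {X : Ω → ℝ} (hX : Measurable X) (c : ℝ≥0∞) :
    Convex ℝ {Z | Z ∈ Dens P ∧ ∫⁻ ω, ENNReal.ofReal (Z ω * |X ω|) ∂μ ≤ c} := by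
  intro Z hZ W hW a b ha hb hab
  refine ⟨convex_Dens hZ.1 hW.1 ha hb hab, ?_⟩
  have h := lintegral_sum_mul_abs (P := P) μ (a := ![a, b]) (W := ![Z, W])
    (by simp [Fin.forall_fin_two, ha, hb]) (by simp [Fin.forall_fin_two, hZ.1, hW.1]) hX
  simp only [Fin.sum_univ_two, Matrix.cons_val_zero, Matrix.cons_val_one] at h
  refine h.le.trans ?_
  calc _ ≤ ENNReal.ofReal a * c + ENNReal.ofReal b * c := by
        gcongr
        exacts [hZ.2, hW.2]
    _ = c := by rw [← add_mul, ← ENNReal.ofReal_add ha hb, hab, ENNReal.ofReal_one, one_mul]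

lemma tailSup_convexHull_le {D : Set (Ω → ℝ)} (hD : D ⊆ Dens P) {X : Ω → ℝ}
    (hX : Measurable X) (k : ℕ) :
    tailSup P (convexHull ℝ D) X k ≤ tailSup P D X k := by
  have hconv := convex_setOf_lintegral_le (P := P) (P.restrict {ω | (k : ℝ) < |X ω|}) hX
    (tailSup P D X k)
  exact iSup₂_le fun Z hZ =>
    (hconv.convexHull_subset_iff.2 (fun W hW => ⟨hD hW, le_tailSup hW X k⟩) hZ).2

lemma tailSup_iUnion_le {ι : Type*} [Fintype ι] (Ds : ι → Set (Ω → ℝ)) (X : Ω → ℝ) (k : ℕ) :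
    tailSup P (⋃ n, Ds n) X k ≤ ∑ n, tailSup P (Ds n) X k := by
  refine iSup₂_le fun Z hZ => ?_
  obtain ⟨n, hn⟩ := mem_iUnion.1 hZ
  refine le_trans ?_ (Finset.single_le_sum (f := fun n => tailSup P (Ds n) X k)
    (fun _ _ => zero_le) (Finset.mem_univ n))
  exact le_tailSup hn X k

end

/-- If `D_1, …, D_N ⊆ 𝒫` satisfy `L¹_w(D_n) = L¹_s(D_n)`, then
(i) any convex combination `D = Σ_n a_n D_n` satisfies `L¹_w(D) = L¹_s(D)`, and
(ii) `D = conv(D_1 ∪ … ∪ D_N)` satisfies `L¹_w(D) = L¹_s(D)`. -/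
theorem stmt_5 (P : Measure Ω) [IsProbabilityMeasure P] (N : ℕ)
    (Ds : Fin N → Set (Ω → ℝ)) (hsub : ∀ n, Ds n ⊆ Dens P)
    (hws : ∀ n, Lw P (Ds n) = Ls P (Ds n)) :
    (∀ a : Fin N → ℝ, (∀ n, 0 ≤ a n) → ∑ n, a n = 1 →
      Lw P {Z | ∃ W : Fin N → Ω → ℝ, (∀ n, W n ∈ Ds n) ∧
              Z = fun ω => ∑ n, a n * W n ω}
        = Ls P {Z | ∃ W : Fin N → Ω → ℝ, (∀ n, W n ∈ Ds n) ∧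
              Z = fun ω => ∑ n, a n * W n ω}) ∧
    Lw P (convexHull ℝ (⋃ n, Ds n)) = Ls P (convexHull ℝ (⋃ n, Ds n)) := by
  refine ⟨fun a ha hsum => ?_, ?_⟩
  · refine Subset.antisymm (fun X hX => ⟨hX.1, ?_⟩)
      (Ls_subset_Lw (convexComb_subset_Dens hsub ha hsum))
    by_cases hne : ∀ n, (Ds n).Nonempty
    · have hlim : Tendsto (fun k => ∑ n, ENNReal.ofReal (a n) * tailSup P (Ds n) X k) atTop
          (nhds (∑ _n : Fin N, 0)) := by
        refine tendsto_finsetSum _ fun n _ => ?_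
        rcases (ha n).eq_or_lt with h | h
        · simp [← h]
        · have hXn : X ∈ Ls P (Ds n) :=
            hws n ▸ mem_Lw_of_mem_Lw_convexComb hsub hne ha hsum hX h
          simpa using ENNReal.Tendsto.const_mul hXn.2 (Or.inr ENNReal.ofReal_ne_top)
      rw [Finset.sum_const_zero] at hlim
      exact tendsto_of_tendsto_of_tendsto_of_le_of_le tendsto_const_nhds hlim
        (fun _ => zero_le) (tailSup_convexComb_le hsub ha hX.1)
    · have hempty : {Z | ∃ W : Fin N → Ω → ℝ, (∀ n, W n ∈ Ds n) ∧
          Z = fun ω => ∑ n, a n * W n ω} = ∅ :=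
        eq_empty_of_forall_notMem fun _ ⟨W, hW, _⟩ => hne fun n => ⟨W n, hW n⟩
      rw [hempty]
      refine tendsto_const_nhds.congr fun k => ?_
      simp [tailSup]
  · have hU : (⋃ n, Ds n) ⊆ Dens P := iUnion_subset hsub
    refine Subset.antisymm (fun X hX => ⟨hX.1, ?_⟩)
      (Ls_subset_Lw (convexHull_min hU convex_Dens))
    have hlim : Tendsto (fun k => ∑ n, tailSup P (Ds n) X k) atTop
        (nhds (∑ _n : Fin N, 0)) := by
      refine tendsto_finsetSum _ fun n _ => ?_
      have hXn : X ∈ Ls P (Ds n) :=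
        hws n ▸ Lw_anti ((subset_iUnion Ds n).trans (subset_convexHull ℝ _)) hX
      exact hXn.2
    rw [Finset.sum_const_zero] at hlim
    exact tendsto_of_tendsto_of_tendsto_of_le_of_le tendsto_const_nhds hlim (fun _ => zero_le)
      fun k => (tailSup_convexHull_le hU hX.1 k).trans (tailSup_iUnion_le Ds X k)
end
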